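/- arXiv:0710.3991 — 2 statements merged into one kernel-verified Lean document; each statement's English description precedes it below -/
import Mathlib

section
/- Let X ⊂ ℝⁿ be open and v : X → [−∞, ∞) upper semicontinuous. Then v is subaffine on X if and only if u + v is subaffine on X for every function u : X → ℝ whose restriction to each open ball contained in X is convex (with the convention −∞ + t = −∞). -/
open Set Metric Filter MeasureTheory Asymptotics
open scoped Topology BigOperators RealInnerProductSpace

noncomputable section

abbrev Euc (n : ℕ) : Type := EuclideanSpace ℝ (Fin n)

abbrev SymMat (n : ℕ) : Type := ↥(selfAdjoint (Matrix (Fin n) (Fin n) ℝ))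

/-- `u` is subaffine on `X`. -/
def SubaffineOn {n : ℕ} (X : Set (Euc n)) (u : Euc n → EReal) : Prop :=
  ∀ K : Set (Euc n), IsCompact K → K ⊆ X →
    ∀ a : Euc n →ᵃ[ℝ] ℝ,
      (∀ x ∈ frontier K, u x ≤ (a x : EReal)) → ∀ x ∈ K, u x ≤ (a x : EReal)

/-- The Hessian matrix of `u` at `x`. -/
def hessMat {n : ℕ} (u : Euc n → ℝ) (x : Euc n) : Matrix (Fin n) (Fin n) ℝ :=
  fun i j => iteratedFDeriv ℝ 2 u x ![EuclideanSpace.single i 1, EuclideanSpace.single j 1]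

structure IsDirichletSet {n : ℕ} (F : Set (SymMat n)) : Prop where
  nonempty : F.Nonempty
  ne_univ : F ≠ Set.univ
  isClosed : IsClosed F
  add_psd : ∀ A ∈ F, ∀ P : SymMat n, (P : Matrix (Fin n) (Fin n) ℝ).PosSemidef → A + P ∈ F

/-- The Dirichlet dual `F̃ = −(∼ Int F)`. -/
def dirDual {n : ℕ} (F : Set (SymMat n)) : Set (SymMat n) := {A | -A ∉ interior F}

/-- A C² function `v` on `X` is of type `F`. -/
def IsTypeFC2 {n : ℕ} (F : Set (SymMat n)) (X : Set (Euc n)) (v : Euc n → ℝ) : Prop :=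
  ContDiffOn ℝ 2 v X ∧ ∀ x ∈ X, ∃ A ∈ F, (A : Matrix (Fin n) (Fin n) ℝ) = hessMat v x

/-- An u.s.c. function `u` is of type `F` on `X`. -/
def IsTypeF {n : ℕ} (F : Set (SymMat n)) (X : Set (Euc n)) (u : Euc n → EReal) : Prop :=
  ∀ v : Euc n → ℝ, IsTypeFC2 (dirDual F) X v → SubaffineOn X (fun x => u x + (v x : EReal))

/-- The ray set `F⃗` of `F`. -/
def raySet {n : ℕ} (F : Set (SymMat n)) : Set (SymMat n) :=
  closure {A : SymMat n | ∃ t₀ : ℝ, ∀ t : ℝ, t₀ ≤ t → t • A ∈ F}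

/-- The bilinear form `⟨A v, w⟩` of a matrix. -/
def bilin {n : ℕ} (A : Matrix (Fin n) (Fin n) ℝ) (v w : Euc n) : ℝ :=
  ∑ i, ∑ j, A i j * v i * w j

/-- `A` is not negative definite. -/
def NotNegDef {n : ℕ} (A : SymMat n) : Prop :=
  ¬ (-(A : Matrix (Fin n) (Fin n) ℝ)).PosDef

def IsLocalDefiningFn {n : ℕ} (Ω U : Set (Euc n)) (ρ : Euc n → ℝ) : Prop :=
  IsOpen U ∧ ContDiffOn ℝ (⊤ : ℕ∞) ρ U ∧ Ω ∩ U = {y ∈ U | ρ y < 0} ∧ ∀ y ∈ U, fderiv ℝ ρ y ≠ 0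

def HasSmoothBoundary {n : ℕ} (Ω : Set (Euc n)) : Prop :=
  ∀ x ∈ frontier Ω, ∃ U ρ, x ∈ U ∧ IsLocalDefiningFn Ω U ρ

/-- `∂Ω` is strictly `G`-convex at `x`. -/
def StrictlyConvexAt {n : ℕ} (G : Set (SymMat n)) (Ω : Set (Euc n)) (x : Euc n) : Prop :=
  ∃ U ρ, x ∈ U ∧ IsLocalDefiningFn Ω U ρ ∧
    ∃ B ∈ interior G, ∀ v w : Euc n, fderiv ℝ ρ x v = 0 → fderiv ℝ ρ x w = 0 →
      bilin (hessMat ρ x) v w = bilin (B : Matrix (Fin n) (Fin n) ℝ) v w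

def symOne (n : ℕ) : SymMat n := ⟨1, selfAdjoint.mem_iff.mpr (IsSelfAdjoint.one _)⟩

/-- `u` is twice differentiable at `x` with Hessian `A`. -/
def TwiceDiffWithHessAt {n : ℕ} (u : Euc n → ℝ) (x : Euc n)
    (A : Matrix (Fin n) (Fin n) ℝ) : Prop :=
  ∃ p : Euc n, (fun h : Euc n => u (x + h) - u x - ⟪p, h⟫ - 1/2 * bilin A h h)
      =o[𝓝 (0 : Euc n)] fun h => ‖h‖ ^ 2

/-!
Subaffinity is a local property. Indeed, if `w` violates an affine bound on a compact set `K`, then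
maximizing `w - a + ε ‖· - p‖²` over `K`, for small `ε`, produces an interior point `z` at which
some affine function touches `w` from above with quadratic gap; comparing on a small ball around `z`
shows that `w` is not subaffine on any neighbourhood of `z`.
It is therefore enough to add a convex `u` on a closed ball. There `u` is a supremum of affine
minorants `ℓ`, and for each of them the bound `ℓ + v ≤ a` on `∂K` propagates to `K` because `a - ℓ`
is affine.
-/

theorem coe_add_le_coe_iff {r s : ℝ} {y : EReal} :
    (r : EReal) + y ≤ s ↔ y ≤ ((s - r : ℝ) : EReal) := by
  induction y with
  | bot => simp
  | top => simp [-EReal.coe_sub]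
  | coe y => norm_cast; exact le_sub_iff_add_le'.symm

theorem upperSemicontinuousOn_coe_add {α : Type*} [TopologicalSpace α] {s : Set α} {f : α → ℝ}
    {w : α → EReal} (hf : ContinuousOn f s) (hw : UpperSemicontinuousOn w s) :
    UpperSemicontinuousOn (fun x => (f x : EReal) + w x) s :=
  (continuous_coe_real_ereal.comp_continuousOn hf).upperSemicontinuousOn.add' hw
    fun _ _ => EReal.continuousAt_add (by simp) (by simp)

section StrictAffineContact

variable {E : Type*} [NormedAddCommGroup E] [InnerProductSpace ℝ E] {w : E → EReal} {z p : E}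
  {ε : ℝ} {a : E →ᵃ[ℝ] ℝ}

/-- An affine function touches `w` from above at `z`, with a gap growing at least quadratically
near `z`. This is the local obstruction to subaffinity. -/
def HasStrictAffineContactAt (w : E → EReal) (z : E) : Prop :=
  ∃ a : E →ᵃ[ℝ] ℝ, ∃ ε > 0, w z = a z ∧
    ∀ᶠ x in 𝓝 z, w x ≤ ((a x - ε * ‖x - z‖ ^ 2 : ℝ) : EReal)

theorem hasStrictAffineContactAt_of_isLocalMax (hε : 0 < ε) (htop : w z ≠ ⊤) (hbot : w z ≠ ⊥)
    (hmax : IsLocalMax (fun x => ((ε * ‖x - p‖ ^ 2 - a x : ℝ) : EReal) + w x) z) :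
    HasStrictAffineContactAt w z := by
  obtain ⟨m, hm⟩ : ∃ m : ℝ, (m : EReal) = w z := CanLift.prf _ ⟨htop, hbot⟩
  -- Replacing `‖x - p‖²` by `‖x - z‖²` changes the function only by an affine term.
  let b : E →ᵃ[ℝ] ℝ := a - (2 * ε) • (innerₗ E (z - p)).toAffineMap
    + AffineMap.const ℝ E (m - a z + 2 * ε * ⟪z - p, z⟫)
  have hb (x : E) : b x = a x - a z + m - 2 * ε * ⟪z - p, x - z⟫ := by
    simp only [b, AffineMap.coe_add, AffineMap.coe_sub, AffineMap.coe_smul, AffineMap.coe_const,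
      LinearMap.coe_toAffineMap, Pi.add_apply, Pi.sub_apply, Pi.smul_apply, Function.const_apply,
      innerₗ_apply_apply, smul_eq_mul, inner_sub_right]
    ring
  refine ⟨b, ε, hε, by simp [hb, hm], hmax.mono fun x hx => ?_⟩
  replace hx : w x ≤ ((ε * ‖z - p‖ ^ 2 - a z + m - (ε * ‖x - p‖ ^ 2 - a x) : ℝ) : EReal) := by
    rwa [← coe_add_le_coe_iff, EReal.coe_add _ m, hm]
  have hexpand : ‖x - p‖ ^ 2 = ‖z - p‖ ^ 2 + 2 * ⟪z - p, x - z⟫ + ‖x - z‖ ^ 2 := by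
    rw [← norm_add_sq_real, sub_add_sub_cancel']
  convert hx using 2
  rw [hb, hexpand]
  ring

theorem exists_pos_forall_mul_norm_sub_sq_lt {F : Type*} [SeminormedAddCommGroup F] {K : Set F}
    (hK : Bornology.IsBounded K) (p : F) {δ : ℝ} (hδ : 0 < δ) :
    ∃ ε > 0, ∀ x ∈ K, ε * ‖x - p‖ ^ 2 < δ := by
  obtain ⟨R, hR, hKR⟩ := hK.subset_ball_lt 0 p
  refine ⟨δ / R ^ 2, by positivity, fun x hx => ?_⟩
  have hxR : ‖x - p‖ < R := mem_ball_iff_norm.1 (hKR hx)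
  calc δ / R ^ 2 * ‖x - p‖ ^ 2 < δ / R ^ 2 * R ^ 2 := by gcongr
    _ = δ := div_mul_cancel₀ δ (by positivity)

theorem exists_hasStrictAffineContactAt [FiniteDimensional ℝ E] {K : Set E} (hK : IsCompact K)
    (hw : UpperSemicontinuousOn w K) (htop : ∀ x ∈ K, w x ≠ ⊤)
    (hbd : ∀ x ∈ frontier K, w x ≤ a x) (hp : p ∈ K) (hlt : a p < w p) :
    ∃ z ∈ interior K, HasStrictAffineContactAt w z := by
  obtain ⟨m, hm⟩ : ∃ m : ℝ, (m : EReal) = w p := CanLift.prf _ ⟨htop p hp, hlt.ne_bot⟩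
  have hgap : 0 < m - a p := sub_pos.2 (by rwa [← hm, EReal.coe_lt_coe_iff] at hlt)
  obtain ⟨ε, hε, hεK⟩ := exists_pos_forall_mul_norm_sub_sq_lt hK.isBounded p hgap
  let q : E → ℝ := fun x => ε * ‖x - p‖ ^ 2 - a x
  have hq : Continuous q := by
    have := a.continuous_of_finiteDimensional
    fun_prop
  obtain ⟨z, hz, hmax⟩ :=
    (upperSemicontinuousOn_coe_add hq.continuousOn hw).exists_isMaxOn ⟨p, hp⟩ hK
  have hpz : ((m - a p : ℝ) : EReal) ≤ q z + w z := by
    have hqp : q p + m = m - a p := by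
      simp [q, neg_add_eq_sub]
    rw [← hqp, EReal.coe_add, hm]
    exact hmax hp
  have hzK : z ∈ interior K := by
    by_contra hzK
    have hle : (q z : EReal) + w z ≤ ((ε * ‖z - p‖ ^ 2 : ℝ) : EReal) :=
      coe_add_le_coe_iff.2 (by simpa [q] using hbd z ⟨subset_closure hz, hzK⟩)
    exact (EReal.coe_le_coe_iff.1 (hpz.trans hle)).not_gt (hεK z hz)
  have hbot : w z ≠ ⊥ := by
    intro h
    rw [h, EReal.add_bot, le_bot_iff] at hpz
    exact EReal.coe_ne_bot _ hpz
  exact ⟨z, hzK, hasStrictAffineContactAt_of_isLocalMax hε (htop z hz) hbot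
    (hmax.isLocalMax (mem_interior_iff_mem_nhds.1 hzK))⟩

end StrictAffineContact

namespace SubaffineOn

variable {n : ℕ} {X Y : Set (Euc n)} {u : Euc n → ℝ} {v w : Euc n → EReal}

theorem mono (hw : SubaffineOn Y w) (hXY : X ⊆ Y) : SubaffineOn X w :=
  fun K hK hKX => hw K hK (hKX.trans hXY)

theorem not_hasStrictAffineContactAt {z : Euc n} (hw : SubaffineOn X w) (hX : X ∈ 𝓝 z) :
    ¬ HasStrictAffineContactAt w z := by
  rintro ⟨a, ε, hε, haz, hle⟩
  obtain ⟨r, hr, hball⟩ := nhds_basis_closedBall.mem_iff.1 (inter_mem hX hle)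
  let b : Euc n →ᵃ[ℝ] ℝ := a - AffineMap.const ℝ (Euc n) (ε * r ^ 2)
  have hsphere : ∀ x ∈ frontier (closedBall z r), w x ≤ (b x : EReal) := by
    intro x hx
    have hxr : ‖x - z‖ = r := mem_sphere_iff_norm.1 (frontier_closedBall_subset_sphere hx)
    simpa [b, hxr] using (hball (isClosed_closedBall.frontier_subset hx)).2
  have hcenter : w z ≤ (b z : EReal) := hw (closedBall z r) (isCompact_closedBall z r)
    (hball.trans inter_subset_left) b hsphere z (mem_closedBall_self hr.le)
  rw [haz, EReal.coe_le_coe_iff] at hcenter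
  have : 0 < ε * r ^ 2 := by positivity
  simp only [b, AffineMap.coe_sub, AffineMap.coe_const, Pi.sub_apply, Function.const_apply]
    at hcenter
  linarith

theorem of_locally (hw : UpperSemicontinuousOn w X) (htop : ∀ x ∈ X, w x ≠ ⊤)
    (hloc : ∀ x ∈ X, ∃ t ∈ 𝓝[X] x, SubaffineOn t w) : SubaffineOn X w := by
  intro K hK hKX a hbd x hx
  by_contra! hlt
  obtain ⟨z, hz, hcontact⟩ := exists_hasStrictAffineContactAt hK (hw.mono hKX)
    (fun y hy => htop y (hKX hy)) hbd hx hlt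
  obtain ⟨t, ht, hwt⟩ := hloc z (hKX (interior_subset hz))
  have hXz : X ∈ 𝓝 z := mem_of_superset (mem_interior_iff_mem_nhds.1 hz) hKX
  exact hwt.not_hasStrictAffineContactAt (nhdsWithin_eq_nhds.2 hXz ▸ ht) hcontact

theorem convexOn_add (hv : SubaffineOn X v) (hX : IsClosed X) (hu : ConvexOn ℝ X u)
    (hlsc : LowerSemicontinuousOn u X) : SubaffineOn X (fun x => (u x : EReal) + v x) := by
  intro K hK hKX a hbd p hp
  rw [coe_add_le_coe_iff]
  refine EReal.le_of_forall_lt_iff_le.1 fun s hs => ?_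
  have hlt : a p - s < u p := by
    rw [EReal.coe_lt_coe_iff] at hs
    linarith
  obtain ⟨l, c, hle, hlp⟩ := hu.exists_affine_le_of_lt (𝕜 := ℝ) (hKX hp) hlt hX hlsc
  let b : Euc n →ᵃ[ℝ] ℝ := a - (l.toLinearMap.toAffineMap + AffineMap.const ℝ (Euc n) c)
  have hb (x : Euc n) : b x = a x - (l x + c) := by simp [b]
  have hminorant : ∀ x ∈ X, l x + c ≤ u x := fun x hx => hle ⟨x, hx⟩
  have hbdv : ∀ x ∈ frontier K, v x ≤ (b x : EReal) := by
    intro x hx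
    refine (coe_add_le_coe_iff.1 (hbd x hx)).trans (EReal.coe_le_coe_iff.2 ?_)
    rw [hb]
    exact sub_le_sub_left (hminorant x (hKX (hK.isClosed.frontier_subset hx))) _
  have hbp : b p = s := by
    have hlp' : l p + c = a p - s := hlp
    rw [hb, hlp', sub_sub_cancel]
  exact hbp ▸ hv K hK hKX b hbdv p hp

end SubaffineOn

theorem continuousOn_of_convexOn_balls {E : Type*} [NormedAddCommGroup E] [NormedSpace ℝ E]
    [FiniteDimensional ℝ E] {X : Set E} (hX : IsOpen X) {u : E → ℝ}
    (hu : ∀ c r, ball c r ⊆ X → ConvexOn ℝ (ball c r) u) : ContinuousOn u X := by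
  intro x hx
  obtain ⟨r, hr, hball⟩ := Metric.isOpen_iff.1 hX x hx
  exact ((hu x r hball).continuousOn isOpen_ball).continuousAt (ball_mem_nhds x hr)
    |>.continuousWithinAt

/-- Proposition 2.5: `v` is subaffine on `X` iff `u + v` is subaffine
on `X` for every function `u` that is convex on every open ball contained in `X`. -/
theorem subaffine_iff_add_convex {n : ℕ} (X : Set (Euc n)) (hX : IsOpen X)
    (v : Euc n → EReal) (husc : UpperSemicontinuousOn v X) (hfin : ∀ x ∈ X, v x ≠ ⊤) :
    SubaffineOn X v ↔
      ∀ u : Euc n → ℝ,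
        (∀ (c : Euc n) (r : ℝ), Metric.ball c r ⊆ X → ConvexOn ℝ (Metric.ball c r) u) →
        SubaffineOn X (fun x => (u x : EReal) + v x) := by
  constructor
  · intro hv u hu
    have hcont : ContinuousOn u X := continuousOn_of_convexOn_balls hX hu
    refine .of_locally (upperSemicontinuousOn_coe_add hcont husc)
      (fun x hx => EReal.add_ne_top (EReal.coe_ne_top _) (hfin x hx)) fun z hz => ?_
    obtain ⟨r, hr, hball⟩ := Metric.isOpen_iff.1 hX z hz
    have hsub : closedBall z (r / 2) ⊆ ball z r := closedBall_subset_ball (half_lt_self hr)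
    have hu_ball : ConvexOn ℝ (closedBall z (r / 2)) u :=
      (hu z r hball).subset hsub (convex_closedBall z _)
    have hcont_ball : ContinuousOn u (closedBall z (r / 2)) :=
      hcont.mono (hsub.trans hball)
    exact ⟨closedBall z (r / 2), mem_nhdsWithin_of_mem_nhds (closedBall_mem_nhds z (half_pos hr)),
      (hv.mono (hsub.trans hball)).convexOn_add isClosed_closedBall hu_ball
        hcont_ball.lowerSemicontinuousOn⟩
  · intro h
    simpa using h 0 fun c r _ => convexOn_const 0 (convex_ball c r)
end
end

section
/- Let F ⊂ Sym²(ℝⁿ) be a Dirichlet set with Dirichlet dual F̃. Then: (1) a matrix A ∈ Sym²(ℝⁿ) belongs to F if and only if A + B ∈ P̃ for every B ∈ F̃; and (2) a C² function u on an open set X ⊂ ℝⁿ satisfies Hess_x u ∈ F for all x ∈ X if and only if u + v is subaffine on X for every C² function v on X satisfying Hess_x v ∈ F̃ for all x ∈ X. -/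
open Set Metric Filter MeasureTheory Asymptotics
open scoped Topology BigOperators RealInnerProductSpace

noncomputable section

/-!
The theorem reduces to a pointwise statement about matrices. A `C²` function is subaffine exactly
when its Hessian is nowhere negative definite: if the Hessian has a nonnegative direction at every
point, then adding `ε ‖x‖²` makes it positive in some direction, which excludes interior maxima;
conversely, where the Hessian is negative definite, the tangent plane lowered by a small constant
dominates the function on a small sphere but not at its centre. Testing against the quadratic
polynomials with Hessian `B ∈ F̃` then turns the second part into the first one. The latter holds
because `C > A ∈ F` forces `C ∈ Int F`, and because `A` is the limit of `A + ε I` as `ε → 0⁺`.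
-/

section SecondDerivative

variable {E G : Type*} [NormedAddCommGroup E] [NormedSpace ℝ E]
  [NormedAddCommGroup G] [NormedSpace ℝ G]

lemma hasFDerivAt_apply_self (L : E →L[ℝ] E →L[ℝ] G) (x : E) :
    HasFDerivAt (fun y ↦ L y y) ((L + L.flip) x) x := by
  refine (L.hasFDerivAt.clm_apply (hasFDerivAt_id x)).congr_fderiv ?_
  ext h
  simp

lemma contDiff_apply_self (L : E →L[ℝ] E →L[ℝ] G) {k : WithTop ℕ∞} :
    ContDiff ℝ k fun y ↦ L y y :=
  L.contDiff.clm_apply contDiff_id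

lemma fderiv_fderiv_apply_self (L : E →L[ℝ] E →L[ℝ] G) (x : E) :
    fderiv ℝ (fderiv ℝ fun y ↦ L y y) x = L + L.flip := by
  have hfderiv : (fderiv ℝ fun y ↦ L y y) = L + L.flip :=
    funext fun y ↦ (hasFDerivAt_apply_self L y).fderiv
  rw [hfderiv]
  exact (L + L.flip).fderiv

lemma differentiableAt_fderiv_of_contDiffAt {f : E → G} {x : E} (hf : ContDiffAt ℝ 2 f x) :
    DifferentiableAt ℝ (fderiv ℝ f) x :=
  (hf.fderiv_right (m := 1) (by norm_num)).differentiableAt one_ne_zero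

lemma eventually_differentiableAt_of_contDiffAt {f : E → G} {x : E} (hf : ContDiffAt ℝ 2 f x) :
    ∀ᶠ y in 𝓝 x, DifferentiableAt ℝ f y :=
  (hf.eventually (by simp)).mono fun _ hy ↦ hy.differentiableAt two_ne_zero

lemma fderiv_fderiv_add {f g : E → G} {x : E} (hf : ContDiffAt ℝ 2 f x)
    (hg : ContDiffAt ℝ 2 g x) :
    fderiv ℝ (fderiv ℝ fun y ↦ f y + g y) x
      = fderiv ℝ (fderiv ℝ f) x + fderiv ℝ (fderiv ℝ g) x := by
  have hfderiv : (fderiv ℝ fun y ↦ f y + g y) =ᶠ[𝓝 x] fun y ↦ fderiv ℝ f y + fderiv ℝ g y := by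
    filter_upwards [eventually_differentiableAt_of_contDiffAt hf,
      eventually_differentiableAt_of_contDiffAt hg] with y hfy hgy using fderiv_fun_add hfy hgy
  rw [hfderiv.fderiv_eq]
  exact fderiv_fun_add (differentiableAt_fderiv_of_contDiffAt hf)
    (differentiableAt_fderiv_of_contDiffAt hg)

lemma fderiv_fderiv_continuousAffineMap (a : E →ᴬ[ℝ] G) (x : E) :
    fderiv ℝ (fderiv ℝ a) x = 0 := by
  have hfderiv : fderiv ℝ a = fun _ ↦ a.contLinear := funext fun y ↦ a.hasFDerivAt.fderiv
  rw [hfderiv, fderiv_fun_const, Pi.zero_apply]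

theorem sub_taylor_two_isLittleO {f : E → G} {x : E} (hf : ContDiffAt ℝ 2 f x) :
    (fun y ↦ f y - (f x + fderiv ℝ f x (y - x)
      + (1 / 2 : ℝ) • fderiv ℝ (fderiv ℝ f) x (y - x) (y - x))) =o[𝓝 x] fun y ↦ ‖y - x‖ ^ 2 := by
  set L := fderiv ℝ (fderiv ℝ f) x
  have hsymm : L.flip = L := by
    ext v w
    exact hf.isSymmSndFDerivAt (by simp) w v
  obtain ⟨r, hr, hdiff⟩ := Metric.eventually_nhds_iff_ball.mp
    (eventually_differentiableAt_of_contDiffAt hf)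
  have hderiv : ∀ y ∈ ball x r, HasFDerivWithinAt
      (fun y ↦ f y - (fderiv ℝ f x (y - x) + (1 / 2 : ℝ) • L (y - x) (y - x)))
      (fderiv ℝ f y - (fderiv ℝ f x + L (y - x))) (ball x r) y := by
    intro y hy
    have hsub : HasFDerivAt (fun y ↦ y - x) (.id ℝ E) y := (hasFDerivAt_id y).sub_const x
    have hlin := (fderiv ℝ f x).hasFDerivAt.comp y hsub
    have hquad := ((hasFDerivAt_apply_self L (y - x)).comp y hsub).const_smul (1 / 2 : ℝ)
    refine ((hdiff y hy).hasFDerivAt.sub (hlin.add hquad)).hasFDerivWithinAt.congr_fderiv ?_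
    ext h
    simp [hsymm, ← two_smul ℝ]
  have hsmall : (fun y ↦ fderiv ℝ f y - (fderiv ℝ f x + L (y - x)))
      =o[𝓝[ball x r] x] fun y ↦ ‖y - x‖ ^ 1 := by
    have hlittle := (differentiableAt_fderiv_of_contDiffAt hf).hasFDerivAt.isLittleO
    simpa only [pow_one, sub_sub] using hlittle.norm_right.mono nhdsWithin_le_nhds
  have hmain := (convex_ball x r).isLittleO_pow_succ (mem_ball_self hr) hderiv hsmall
  rw [isOpen_ball.nhdsWithin_eq (mem_ball_self hr)] at hmain
  refine hmain.congr_left fun y ↦ ?_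
  simp only [sub_self, map_zero, smul_zero, add_zero, sub_zero]
  abel

lemma deriv_deriv_nonpos_of_isLocalMax {f : ℝ → ℝ} {a : ℝ} (hmax : IsLocalMax f a)
    (hf : ContinuousAt f a) : deriv (deriv f) a ≤ 0 := by
  by_contra! hpos
  have hmin : IsLocalMin f a := isLocalMin_of_deriv_deriv_pos hpos hmax.deriv_eq_zero hf
  have hconst : f =ᶠ[𝓝 a] fun _ ↦ f a := by
    filter_upwards [hmax, hmin] with b hle hge using le_antisymm hle hge
  rw [hconst.deriv.deriv_eq] at hpos
  simp at hpos

lemma fderiv_fderiv_nonpos_of_isLocalMax {f : E → ℝ} {x : E} (hmax : IsLocalMax f x)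
    (hf : ContDiffAt ℝ 2 f x) (h : E) : fderiv ℝ (fderiv ℝ f) x h h ≤ 0 := by
  have hline : ContinuousAt (fun t : ℝ ↦ x + t • h) 0 := by fun_prop
  have htendsto : Tendsto (fun t : ℝ ↦ x + t • h) (𝓝 0) (𝓝 x) := by simpa using hline.tendsto
  have hderiv : deriv (fun t : ℝ ↦ f (x + t • h)) =ᶠ[𝓝 0] fun t ↦ fderiv ℝ f (x + t • h) h := by
    filter_upwards [htendsto.eventually (eventually_differentiableAt_of_contDiffAt hf)] with t ht
      using ht.deriv_comp_add_smul
  have hdiff : DifferentiableAt ℝ (fun y ↦ fderiv ℝ f y h) (x + (0 : ℝ) • h) := by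
    simpa using (differentiableAt_fderiv_of_contDiffAt hf).clm_apply (differentiableAt_const h)
  have hderiv2 : deriv (deriv fun t : ℝ ↦ f (x + t • h)) 0 = fderiv ℝ (fderiv ℝ f) x h h := by
    rw [hderiv.deriv_eq, hdiff.deriv_comp_add_smul, zero_smul, add_zero,
      fderiv_clm_apply (differentiableAt_fderiv_of_contDiffAt hf) (differentiableAt_const h)]
    simp
  rw [← hderiv2]
  refine deriv_deriv_nonpos_of_isLocalMax ?_ ?_
  · simpa [IsLocalMax, IsMaxFilter] using htendsto.eventually hmax
  · exact ContinuousAt.comp (by simpa using hf.continuousAt) hline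

lemma eventually_le_sub_sq_of_isCoercive_neg {f : E → ℝ} {x : E} (hf : ContDiffAt ℝ 2 f x)
    (hneg : IsCoercive (-fderiv ℝ (fderiv ℝ f) x)) :
    ∃ c > 0, ∀ᶠ y in 𝓝 x, f y ≤ f x + fderiv ℝ f x (y - x) - c * ‖y - x‖ ^ 2 := by
  obtain ⟨C, hC, hcoercive⟩ := hneg
  refine ⟨C / 4, by positivity, ?_⟩
  filter_upwards [(sub_taylor_two_isLittleO hf).bound (show 0 < C / 4 by positivity)] with y hy
  have htaylor := (abs_le.mp hy).2
  have hquad := hcoercive (y - x)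
  simp only [norm_pow, norm_norm, smul_eq_mul] at htaylor
  simp only [neg_apply] at hquad
  linarith

theorem le_of_forall_frontier_le_of_exists_pos {f : E → ℝ} {K : Set E} (hK : IsCompact K)
    (hcont : ContinuousOn f K) (hf : ∀ x ∈ interior K, ContDiffAt ℝ 2 f x)
    (hpos : ∀ x ∈ interior K, ∃ h, 0 < fderiv ℝ (fderiv ℝ f) x h h) {c : ℝ}
    (hc : ∀ x ∈ frontier K, f x ≤ c) {x : E} (hx : x ∈ K) : f x ≤ c := by
  obtain ⟨y, hyK, hmax⟩ := hK.exists_isMaxOn ⟨x, hx⟩ hcont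
  refine (hmax hx).trans (hc y ⟨subset_closure hyK, fun hy ↦ ?_⟩)
  obtain ⟨h, hh⟩ := hpos y hy
  exact hh.not_ge (fderiv_fderiv_nonpos_of_isLocalMax
    (hmax.isLocalMax (mem_interior_iff_mem_nhds.mp hy)) (hf y hy) h)

end SecondDerivative

section InnerProductSpace

variable {E : Type*} [NormedAddCommGroup E] [InnerProductSpace ℝ E]

theorem le_of_forall_frontier_le_of_exists_nonneg {f : E → ℝ} {K : Set E} (hK : IsCompact K)
    (hcont : ContinuousOn f K) (hf : ∀ x ∈ interior K, ContDiffAt ℝ 2 f x)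
    (hnonneg : ∀ x ∈ interior K, ∃ h ≠ 0, 0 ≤ fderiv ℝ (fderiv ℝ f) x h h) {c : ℝ}
    (hc : ∀ x ∈ frontier K, f x ≤ c) {x : E} (hx : x ∈ K) : f x ≤ c := by
  obtain ⟨R, hR⟩ := hK.isBounded.exists_norm_le
  have hperturb : ∀ ε > 0, f x ≤ c + ε * R ^ 2 := by
    intro ε hε
    set Q : E →L[ℝ] E →L[ℝ] ℝ := ε • innerSL ℝ
    have hQ (y : E) : Q y y = ε * ‖y‖ ^ 2 := congrArg (ε * ·) (real_inner_self_eq_norm_sq y)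
    have hQsmooth : ContDiff ℝ 2 fun y ↦ Q y y := contDiff_apply_self Q
    have hle : f x + Q x x ≤ c + ε * R ^ 2 := by
      refine le_of_forall_frontier_le_of_exists_pos (f := fun y ↦ f y + Q y y) hK
        (hcont.add hQsmooth.continuous.continuousOn)
        (fun y hy ↦ (hf y hy).add hQsmooth.contDiffAt) (fun y hy ↦ ?_) (fun y hy ↦ ?_) hx
      · obtain ⟨h, hne, hh⟩ := hnonneg y hy
        have hQpos : 0 < Q h h := by
          rw [hQ]
          positivity
        refine ⟨h, ?_⟩
        rw [fderiv_fderiv_add (hf y hy) hQsmooth.contDiffAt, fderiv_fderiv_apply_self]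
        simp only [add_apply, ContinuousLinearMap.flip_apply]
        linarith
      · rw [hQ]
        gcongr
        exacts [hc y hy, hR y (hK.isClosed.frontier_subset hy)]
    have hQx : 0 ≤ Q x x := by
      rw [hQ]
      positivity
    linarith
  have hlim : Tendsto (fun ε : ℝ ↦ c + ε * R ^ 2) (𝓝[>] 0) (𝓝 c) := by
    have hcontinuous : Continuous fun ε : ℝ ↦ c + ε * R ^ 2 := by fun_prop
    simpa using (hcontinuous.tendsto 0).mono_left nhdsWithin_le_nhds
  exact ge_of_tendsto hlim (eventually_mem_nhdsWithin.mono hperturb)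

end InnerProductSpace

section Coercive

variable {E : Type*} [NormedAddCommGroup E] [NormedSpace ℝ E]

lemma isOpen_setOf_isCoercive : IsOpen {L : E →L[ℝ] E →L[ℝ] ℝ | IsCoercive L} := by
  refine isOpen_iff_mem_nhds.mpr fun L ↦ ?_
  rintro ⟨C, hC, hL⟩
  filter_upwards [ball_mem_nhds L (half_pos hC)] with L' hL'
  refine ⟨C / 2, half_pos hC, fun v ↦ ?_⟩
  have hdist : ‖L' - L‖ ≤ C / 2 := (dist_eq_norm L' L).symm.trans_le hL'.le
  have hdiff : |(L' - L) v v| ≤ C / 2 * ‖v‖ * ‖v‖ :=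
    (L' - L).le_of_opNorm₂_le_of_le hdist le_rfl le_rfl
  have hlower := (abs_le.mp hdiff).1
  simp only [sub_apply] at hlower
  linarith [hL v]

lemma isCoercive_iff_forall_pos [FiniteDimensional ℝ E] {L : E →L[ℝ] E →L[ℝ] ℝ} :
    IsCoercive L ↔ ∀ v ≠ 0, 0 < L v v := by
  refine ⟨fun ⟨C, hC, hL⟩ v hv ↦ lt_of_lt_of_le (by positivity) (hL v), fun hpos ↦ ?_⟩
  have hcont : ContinuousOn (fun v ↦ L v v) (sphere 0 1) :=
    (contDiff_apply_self L (k := 0)).continuous.continuousOn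
  obtain ⟨C, hC, hL⟩ := (isCompact_sphere (0 : E) 1).exists_forall_le' hcont
    (a := 0) fun v hv ↦ hpos v (ne_zero_of_mem_unit_sphere ⟨v, hv⟩)
  refine ⟨C, hC, fun v ↦ ?_⟩
  rcases eq_or_ne v 0 with rfl | hv
  · simp
  have hunit := hL (‖v‖⁻¹ • v) (by simp [norm_smul, hv])
  simp only [map_smul, smul_apply, smul_eq_mul] at hunit
  field_simp at hunit
  linarith

end Coercive

section MatrixForm

variable {n : ℕ}

/-- The bilinear form `⟪v, M w⟫` of a square matrix `M`, as a continuous linear function of `M`. It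
identifies the Hessian matrix of a function with its second derivative. -/
def matrixForm (n : ℕ) : Matrix (Fin n) (Fin n) ℝ →L[ℝ] Euc n →L[ℝ] Euc n →L[ℝ] ℝ :=
  LinearMap.toContinuousLinearMap
    { toFun := fun M ↦ (innerSL ℝ).bilinearComp (.id ℝ _) (Matrix.toEuclideanCLM (𝕜 := ℝ) M)
      map_add' := fun M N ↦ by
        ext v w
        simp [inner_add_right]
      map_smul' := fun c M ↦ by
        ext v w
        simp }

open scoped Matrix in
lemma matrixForm_apply (M : Matrix (Fin n) (Fin n) ℝ) (v w : Euc n) :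
    matrixForm n M v w = v.ofLp ⬝ᵥ M *ᵥ w.ofLp :=
  Matrix.inner_toEuclideanCLM M v w

lemma matrixForm_single_single (M : Matrix (Fin n) (Fin n) ℝ) (i j : Fin n) :
    matrixForm n M (EuclideanSpace.single i 1) (EuclideanSpace.single j 1) = M i j := by
  simp [matrixForm_apply]

lemma posDef_iff_isCoercive_matrixForm {M : Matrix (Fin n) (Fin n) ℝ} (hM : M.IsHermitian) :
    M.PosDef ↔ IsCoercive (matrixForm n M) := by
  simp only [Matrix.posDef_iff_dotProduct_mulVec, hM, true_and, isCoercive_iff_forall_pos,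
    matrixForm_apply, star_trivial]
  exact ⟨fun h v hv ↦ h (by simpa using hv), fun h v hv ↦ h (WithLp.toLp 2 v) (by simpa using hv)⟩

lemma isOpen_setOf_posDef :
    IsOpen {A : SymMat n | (A : Matrix (Fin n) (Fin n) ℝ).PosDef} := by
  have hpreimage : {A : SymMat n | (A : Matrix (Fin n) (Fin n) ℝ).PosDef}
      = (fun A : SymMat n ↦ matrixForm n A) ⁻¹' {L | IsCoercive L} := by
    ext A
    exact posDef_iff_isCoercive_matrixForm A.2
  rw [hpreimage]
  exact isOpen_setOf_isCoercive.preimage ((matrixForm n).continuous.comp continuous_subtype_val)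

end MatrixForm

section Hessian

variable {n : ℕ} {f g : Euc n → ℝ} {x : Euc n}

lemma hessMat_apply (f : Euc n → ℝ) (x : Euc n) (i j : Fin n) :
    hessMat f x i j
      = fderiv ℝ (fderiv ℝ f) x (EuclideanSpace.single i 1) (EuclideanSpace.single j 1) := by
  simp [hessMat, iteratedFDeriv_two_apply]

lemma matrixForm_hessMat (f : Euc n → ℝ) (x : Euc n) :
    matrixForm n (hessMat f x) = fderiv ℝ (fderiv ℝ f) x := by
  refine ContinuousLinearMap.coe_injective <| (EuclideanSpace.basisFun (Fin n) ℝ).toBasis.ext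
    fun i ↦ ContinuousLinearMap.coe_injective <|
      (EuclideanSpace.basisFun (Fin n) ℝ).toBasis.ext fun j ↦ ?_
  simp [matrixForm_single_single, hessMat_apply]

lemma hessMat_mem_selfAdjoint (hf : ContDiffAt ℝ 2 f x) :
    hessMat f x ∈ selfAdjoint (Matrix (Fin n) (Fin n) ℝ) := by
  ext i j
  simpa [hessMat_apply] using hf.isSymmSndFDerivAt (by simp) _ _

lemma hessMat_add (hf : ContDiffAt ℝ 2 f x) (hg : ContDiffAt ℝ 2 g x) :
    hessMat (fun y ↦ f y + g y) x = hessMat f x + hessMat g x := by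
  ext i j
  simp [hessMat_apply, fderiv_fderiv_add hf hg]

lemma hessMat_half_matrixForm (B : SymMat n) (x : Euc n) :
    hessMat (fun y ↦ matrixForm n ((1 / 2 : ℝ) • B) y y) x = B := by
  ext i j
  have hsymm : (B : Matrix (Fin n) (Fin n) ℝ) j i = (B : Matrix (Fin n) (Fin n) ℝ) i j :=
    Matrix.IsHermitian.apply B.2 i j
  rw [hessMat_apply, fderiv_fderiv_apply_self]
  simp only [add_apply, ContinuousLinearMap.flip_apply, matrixForm_single_single, Matrix.smul_apply,
    hsymm, smul_eq_mul]
  ring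

lemma posDef_neg_hessMat_iff (hf : ContDiffAt ℝ 2 f x) :
    (-hessMat f x).PosDef ↔ IsCoercive (-fderiv ℝ (fderiv ℝ f) x) := by
  rw [posDef_iff_isCoercive_matrixForm (neg_mem (hessMat_mem_selfAdjoint hf)), map_neg,
    matrixForm_hessMat]

end Hessian

section Subaffine

variable {n : ℕ} {X : Set (Euc n)} {w : Euc n → ℝ}

theorem subaffineOn_of_forall_not_posDef_neg_hessMat (hX : IsOpen X) (hw : ContDiffOn ℝ 2 w X)
    (hhess : ∀ x ∈ X, ¬ (-hessMat w x).PosDef) : SubaffineOn X fun x ↦ (w x : EReal) := by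
  intro K hK hKX a ha x hx
  simp only [EReal.coe_le_coe_iff] at ha ⊢
  let b : Euc n →ᴬ[ℝ] ℝ := -⟨a, a.continuous_of_finiteDimensional⟩
  have hwAt : ∀ y ∈ interior K, ContDiffAt ℝ 2 w y := fun y hy ↦
    hw.contDiffAt (hX.mem_nhds (hKX (interior_subset hy)))
  have hnonneg : ∀ y ∈ interior K,
      ∃ h ≠ 0, 0 ≤ fderiv ℝ (fderiv ℝ fun z ↦ w z + b z) y h h := by
    intro y hy
    have hnot := hhess y (hKX (interior_subset hy))
    rw [posDef_neg_hessMat_iff (hwAt y hy), isCoercive_iff_forall_pos] at hnot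
    push Not at hnot
    obtain ⟨h, hne, hh⟩ := hnot
    refine ⟨h, hne, ?_⟩
    rw [fderiv_fderiv_add (hwAt y hy) b.contDiff.contDiffAt, fderiv_fderiv_continuousAffineMap]
    simpa using hh
  have hle : w x + b x ≤ 0 := le_of_forall_frontier_le_of_exists_nonneg hK
    ((hw.continuousOn.mono hKX).add b.continuous.continuousOn)
    (fun y hy ↦ (hwAt y hy).add b.contDiff.contDiffAt) hnonneg
    (fun y hy ↦ by simpa [b] using ha y hy) hx
  simpa [b] using hle

theorem not_posDef_neg_hessMat_of_subaffineOn {x : Euc n} (hX : X ∈ 𝓝 x)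
    (hw : ContDiffAt ℝ 2 w x) (hsub : SubaffineOn X fun x ↦ (w x : EReal)) :
    ¬ (-hessMat w x).PosDef := by
  intro hpos
  obtain ⟨c, hc, hbound⟩ :=
    eventually_le_sub_sq_of_isCoercive_neg hw ((posDef_neg_hessMat_iff hw).mp hpos)
  obtain ⟨r, hr, hball⟩ := nhds_basis_closedBall.mem_iff.mp (hbound.and hX)
  let a : Euc n →ᵃ[ℝ] ℝ := (fderiv ℝ w x).toLinearMap.toAffineMap
    + AffineMap.const ℝ _ (w x - fderiv ℝ w x x - c * r ^ 2)
  have ha (y : Euc n) : a y = w x + fderiv ℝ w x (y - x) - c * r ^ 2 := by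
    have happly : a y = fderiv ℝ w x y + (w x - fderiv ℝ w x x - c * r ^ 2) := rfl
    rw [happly, map_sub]
    ring
  have hfrontier : ∀ y ∈ frontier (closedBall x r), (w y : EReal) ≤ a y := by
    intro y hy
    have hnorm : ‖y - x‖ = r := mem_sphere_iff_norm.mp (frontier_closedBall_subset_sphere hy)
    rw [EReal.coe_le_coe_iff, ha, ← hnorm]
    exact (hball (isClosed_closedBall.frontier_subset hy)).1
  have hcentre : (w x : EReal) ≤ a x := hsub (closedBall x r) (isCompact_closedBall x r)
    (fun y hy ↦ (hball hy).2) a hfrontier x (mem_closedBall_self hr.le)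
  rw [EReal.coe_le_coe_iff, ha, sub_self, map_zero, add_zero] at hcentre
  have : 0 < c * r ^ 2 := by positivity
  linarith

theorem subaffineOn_iff_not_posDef_neg_hessMat (hX : IsOpen X) (hw : ContDiffOn ℝ 2 w X) :
    SubaffineOn X (fun x ↦ (w x : EReal)) ↔ ∀ x ∈ X, ¬ (-hessMat w x).PosDef :=
  ⟨fun hsub _ hx ↦ not_posDef_neg_hessMat_of_subaffineOn (hX.mem_nhds hx)
    (hw.contDiffAt (hX.mem_nhds hx)) hsub, subaffineOn_of_forall_not_posDef_neg_hessMat hX hw⟩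

end Subaffine

section DirichletDual

variable {n : ℕ} {F : Set (SymMat n)} {A B : SymMat n}

lemma mem_interior_of_posDef_sub
    (hadd : ∀ A ∈ F, ∀ P : SymMat n, (P : Matrix (Fin n) (Fin n) ℝ).PosSemidef → A + P ∈ F)
    (hA : A ∈ F) (hpos : ((B - A : SymMat n) : Matrix (Fin n) (Fin n) ℝ).PosDef) :
    B ∈ interior F := by
  have hopen : IsOpen {C : SymMat n | ((C - A : SymMat n) : Matrix (Fin n) (Fin n) ℝ).PosDef} :=
    isOpen_setOf_posDef.preimage (continuous_id.sub continuous_const)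
  refine interior_maximal (fun C hC ↦ ?_) hopen hpos
  simpa using hadd A hA (C - A) hC.posSemidef

lemma notNegDef_add_of_mem_dirDual
    (hadd : ∀ A ∈ F, ∀ P : SymMat n, (P : Matrix (Fin n) (Fin n) ℝ).PosSemidef → A + P ∈ F)
    (hA : A ∈ F) (hB : B ∈ dirDual F) : NotNegDef (A + B) := fun hneg ↦
  hB (mem_interior_of_posDef_sub hadd hA (by rwa [← neg_add', add_comm]))

lemma mem_of_forall_dirDual_notNegDef (hclosed : IsClosed F)
    (hnot : ∀ B ∈ dirDual F, NotNegDef (A + B)) : A ∈ F := by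
  have hperturb : ∀ ε > (0 : ℝ), A + ε • symOne n ∈ F := by
    intro ε hε
    by_contra hnotMem
    have hdual : -(A + ε • symOne n) ∈ dirDual F := fun hmem ↦
      hnotMem (interior_subset (by simpa using hmem))
    refine hnot _ hdual ?_
    have hpos : (ε • (1 : Matrix (Fin n) (Fin n) ℝ)).PosDef := Matrix.PosDef.one.smul hε
    simpa [symOne] using hpos
  have hlim : Tendsto (fun ε : ℝ ↦ A + ε • symOne n) (𝓝[>] 0) (𝓝 A) := by
    have hcontinuous : Continuous fun ε : ℝ ↦ A + ε • symOne n :=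
      continuous_induced_rng.mpr (continuous_const.add (continuous_id.smul continuous_const))
    simpa using (hcontinuous.tendsto 0).mono_left nhdsWithin_le_nhds
  exact hclosed.mem_of_tendsto hlim (eventually_mem_nhdsWithin.mono hperturb)

end DirichletDual

/-- Lemma 4.3: duality characterization of membership in a Dirichlet
set, for matrices and for C² functions. -/
theorem dirichlet_duality_lemma {n : ℕ} (F : Set (SymMat n)) (hF : IsDirichletSet F) :
    (∀ A : SymMat n, A ∈ F ↔ ∀ B ∈ dirDual F, NotNegDef (A + B)) ∧
    (∀ X : Set (Euc n), IsOpen X → ∀ u : Euc n → ℝ, ContDiffOn ℝ 2 u X →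
      ((∀ x ∈ X, ∃ A ∈ F, (A : Matrix (Fin n) (Fin n) ℝ) = hessMat u x) ↔
        ∀ v : Euc n → ℝ, IsTypeFC2 (dirDual F) X v →
          SubaffineOn X (fun x => ((u x + v x : ℝ) : EReal)))) := by
  have hdual {A B : SymMat n} (hA : A ∈ F) (hB : B ∈ dirDual F) : NotNegDef (A + B) :=
    notNegDef_add_of_mem_dirDual hF.add_psd hA hB
  refine ⟨fun A ↦ ⟨fun hA B ↦ hdual hA, mem_of_forall_dirDual_notNegDef hF.isClosed⟩,
    fun X hX u hu ↦ ⟨fun hhess v ⟨hv, hhessv⟩ ↦ ?_, fun hsub x hx ↦ ?_⟩⟩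
  · refine (subaffineOn_iff_not_posDef_neg_hessMat hX (hu.add hv)).mpr fun x hx ↦ ?_
    obtain ⟨A, hA, hAu⟩ := hhess x hx
    obtain ⟨B, hB, hBv⟩ := hhessv x hx
    have hnhds := hX.mem_nhds hx
    rw [hessMat_add (hu.contDiffAt hnhds) (hv.contDiffAt hnhds), ← hAu, ← hBv]
    exact hdual hA hB
  · have hux := hu.contDiffAt (hX.mem_nhds hx)
    refine ⟨⟨hessMat u x, hessMat_mem_selfAdjoint hux⟩,
      mem_of_forall_dirDual_notNegDef hF.isClosed fun B hB ↦ ?_, rfl⟩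
    have hv : ContDiff ℝ 2 fun y ↦ matrixForm n ((1 / 2 : ℝ) • B) y y := contDiff_apply_self _
    have hnot := (subaffineOn_iff_not_posDef_neg_hessMat hX (hu.add hv.contDiffOn)).mp
      (hsub _ ⟨hv.contDiffOn, fun y _ ↦ ⟨B, hB, (hessMat_half_matrixForm B y).symm⟩⟩) x hx
    rwa [hessMat_add hux hv.contDiffAt, hessMat_half_matrixForm] at hnot
end
end
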